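/- arXiv:1812.08986 — 8 statements merged into one kernel-verified Lean document; each statement's English description precedes it below -/
import Mathlib

section
/- Let g₀ : ℝ^d × [0,π] → [0,∞] be measurable, let e ∈ S^k, r ≥ 0, s ∈ [0,π], and let B ⊆ ℝ^d be a measurable set with 0 < |B| < ∞. Then (1/(|B|·σ_k)) ∬ 1{y₁ ∈ B, ‖y₁−y₂‖ ≤ r, d(u₁,u₂) ≤ s} g₀(y₁−y₂, d(u₁,u₂)) dμ(y₁,u₁) dμ(y₂,u₂) = K_e(r,s), where the double integral is over (ℝ^d × S^k) × (ℝ^d × S^k). In particular, the left-hand side does not depend on the choice of B. -/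
open MeasureTheory Real Set
open scoped ENNReal NNReal RealInnerProductSpace Classical

noncomputable section

/-- `d`-dimensional Euclidean space. -/
abbrev Eucl (d : ℕ) : Type := EuclideanSpace ℝ (Fin d)

/-- The unit `k`-sphere in `ℝ^{k+1}`. -/
abbrev Sph (k : ℕ) : Type := Metric.sphere (0 : EuclideanSpace ℝ (Fin (k+1))) 1

/-- The surface measure `ν` on the `k`-sphere: the `k`-dimensional Hausdorff measure. -/
noncomputable def sphMeasure (k : ℕ) : Measure (Sph k) := μH[k]

/-- The geodesic distance `d(u,v) = arccos ⟨u,v⟩` on the `k`-sphere. -/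
noncomputable def gd {k : ℕ} (u v : Sph k) : ℝ :=
  Real.arccos ⟪(u : EuclideanSpace ℝ (Fin (k+1))), (v : EuclideanSpace ℝ (Fin (k+1)))⟫

/-- The space-sphere K-function with reference direction `e`. -/
noncomputable def ssK {d k : ℕ} (g₀ : Eucl d → ℝ → ℝ≥0∞) (e : Sph k) (r s : ℝ) : ℝ≥0∞ :=
  ∫⁻ y in {y : Eucl d | ‖y‖ ≤ r}, ∫⁻ u in {u : Sph k | gd u e ≤ s}, g₀ y (gd u e) ∂(sphMeasure k)

/-- The upper hemisphere as a graph over the first `k` coordinates. -/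
def capMap (k : ℕ) (x : Fin k → ℝ) : EuclideanSpace ℝ (Fin (k+1)) :=
  WithLp.toLp 2 (Fin.snoc (α := fun _ => ℝ) x (Real.sqrt (1 - ∑ i, x i ^ 2)))

lemma capMap_castSucc (k : ℕ) (x : Fin k → ℝ) (i : Fin k) : capMap k x i.castSucc = x i := by
  simp [capMap]

lemma capMap_last (k : ℕ) (x : Fin k → ℝ) :
    capMap k x (Fin.last k) = Real.sqrt (1 - ∑ i, x i ^ 2) := by
  simp [capMap]

lemma capMap_mem (k : ℕ) (x : Fin k → ℝ) (hx : ∑ i, x i ^ 2 ≤ 1) :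
    capMap k x ∈ Metric.sphere (0 : EuclideanSpace ℝ (Fin (k+1))) 1 := by
  rw [mem_sphere_zero_iff_norm, EuclideanSpace.norm_eq, Real.sqrt_eq_one, Fin.sum_univ_castSucc]
  simp only [capMap_castSucc, capMap_last, Real.norm_eq_abs, sq_abs]
  rw [Real.sq_sqrt (by linarith)]
  ring

lemma sph_sum (k : ℕ) (u : Sph k) :
    ∑ i : Fin k, (u : EuclideanSpace ℝ (Fin (k+1))) i.castSucc ^ 2
      + (u : EuclideanSpace ℝ (Fin (k+1))) (Fin.last k) ^ 2 = 1 := by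
  have h := mem_sphere_zero_iff_norm.1 u.2
  rw [EuclideanSpace.norm_eq, Real.sqrt_eq_one, Fin.sum_univ_castSucc] at h
  simpa only [Real.norm_eq_abs, sq_abs] using h

lemma capMap_proj (k : ℕ) (u : Sph k) (h : 0 < (u : EuclideanSpace ℝ (Fin (k+1))) (Fin.last k)) :
    capMap k (fun i => (u : EuclideanSpace ℝ (Fin (k+1))) i.castSucc) = u := by
  ext j
  refine Fin.lastCases ?_ (fun i => ?_) j
  · rw [capMap_last, ← eq_sub_of_add_eq' (sph_sum k u), Real.sqrt_sq h.le]
  · rw [capMap_castSucc]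

lemma capMap_contDiffAt (k : ℕ) : ContDiffAt ℝ 1 (capMap k) 0 := by
  rw [contDiffAt_euclidean]
  intro j
  refine Fin.lastCases ?_ (fun i => ?_) j
  · simp only [capMap_last]
    apply ContDiffAt.sqrt
    · fun_prop
    · simp
  · simp only [capMap_castSucc]
    fun_prop

lemma hm_fin (k : ℕ) : (μH[(k : ℝ)] : Measure (Fin k → ℝ)) = volume := by
  simpa using hausdorffMeasure_pi_real (ι := Fin k)

lemma sph_move (k : ℕ) (u v : Sph k) : ∃ φ : Sph k ≃ᵢ Sph k, φ u = v ∧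
    ∀ a b, gd (φ a) (φ b) = gd a b := by
  let R := Submodule.reflection (ℝ ∙ ((u : EuclideanSpace ℝ (Fin (k+1))) - v))ᗮ
  have hR : R u = v := Submodule.reflection_sub (by simp)
  have hRR : ∀ x, R (R x) = x := Submodule.reflection_reflection _
  have hm : ∀ x : Sph k, R x ∈ Metric.sphere (0 : EuclideanSpace ℝ (Fin (k+1))) 1 := by
    intro x; rw [mem_sphere_zero_iff_norm, R.norm_map]; simp
  refine ⟨IsometryEquiv.mk' (fun x => ⟨R x, hm x⟩) (fun x => ⟨R x, hm x⟩) ?_ ?_, ?_, ?_⟩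
  · intro x; ext1; exact hRR x
  · intro x y; exact R.isometry x y
  · ext1; exact hR
  · intro a b
    change Real.arccos ⟪R a, R b⟫ = Real.arccos _
    rw [R.inner_map_map]

lemma sph_finiteAt_pole (k : ℕ) : ∃ p : Sph k, (sphMeasure k).FiniteAtFilter (nhds p) := by
  obtain ⟨K, t, ht, hL⟩ := (capMap_contDiffAt k).exists_lipschitzOnWith
  let t' := t ∩ Metric.ball 0 1
  have ht' : t' ∈ nhds (0 : Fin k → ℝ) := Filter.inter_mem ht (Metric.ball_mem_nhds _ one_pos)
  let p : Sph k := ⟨capMap k 0, capMap_mem k 0 (by simp)⟩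
  let pr : Sph k → (Fin k → ℝ) := fun u i => (u : EuclideanSpace ℝ (Fin (k+1))) i.castSucc
  have hpr : Continuous pr := by fun_prop
  have hlast : Continuous fun u : Sph k => (u : EuclideanSpace ℝ (Fin (k+1))) (Fin.last k) := by
    fun_prop
  have hp0 : pr p = 0 := by ext i; simp [pr, p, capMap_castSucc]
  refine ⟨p, pr ⁻¹' t' ∩ {u | 0 < (u : EuclideanSpace ℝ (Fin (k+1))) (Fin.last k)}, ?_, ?_⟩
  · refine Filter.inter_mem (hpr.continuousAt.preimage_mem_nhds (by rwa [hp0])) ?_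
    refine (isOpen_lt continuous_const hlast).mem_nhds ?_
    simp [p, capMap_last]
  · rw [sphMeasure, ← (isometry_subtype_coe).hausdorffMeasure_image (Or.inl (by positivity))]
    calc _ ≤ μH[(k:ℝ)] (capMap k '' t') := by
          apply measure_mono
          rintro _ ⟨u, ⟨hu1, hu2⟩, rfl⟩
          exact ⟨pr u, hu1, capMap_proj k u hu2⟩
      _ ≤ (K : ℝ≥0∞) ^ (k:ℝ) * μH[(k:ℝ)] t' :=
          (hL.mono inter_subset_left).hausdorffMeasure_image_le (by positivity)
      _ < ⊤ := by
          rw [hm_fin]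
          refine ENNReal.mul_lt_top (by simp [ENNReal.rpow_natCast]) ?_
          exact (measure_mono inter_subset_right).trans_lt measure_ball_lt_top

lemma sph_mp (k : ℕ) (φ : Sph k ≃ᵢ Sph k) :
    MeasurePreserving φ (sphMeasure k) (sphMeasure k) :=
  φ.measurePreserving_hausdorffMeasure k

lemma sph_finite (k : ℕ) : IsFiniteMeasure (sphMeasure k) := by
  obtain ⟨p, s, hs, hf⟩ := sph_finiteAt_pole k
  constructor
  refine isCompact_univ.measure_lt_top_of_nhdsWithin fun x _ => ?_
  obtain ⟨φ, hφ, -⟩ := sph_move k x p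
  rw [nhdsWithin_univ]
  refine ⟨φ ⁻¹' s, φ.continuous.continuousAt.preimage_mem_nhds (by rwa [hφ]), ?_⟩
  rwa [(sph_mp k φ).measure_preimage_emb φ.toHomeomorph.measurableEmbedding]

lemma sph_pos (k : ℕ) : sphMeasure k Set.univ ≠ 0 := by
  intro h0
  let pr : Sph k → (Fin k → ℝ) := fun u i => (u : EuclideanSpace ℝ (Fin (k+1))) i.castSucc
  have hL : LipschitzWith 1 pr := by
    refine LipschitzWith.of_dist_le_mul fun u v => ?_
    rw [NNReal.coe_one, one_mul, dist_pi_le_iff dist_nonneg]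
    intro i
    have := PiLp.norm_apply_le ((u : EuclideanSpace ℝ (Fin (k+1))) -
      (v : EuclideanSpace ℝ (Fin (k+1)))) i.castSucc
    rw [Subtype.dist_eq, dist_eq_norm, dist_eq_norm]
    exact this
  have h1 := hL.hausdorffMeasure_image_le (d := k) (by positivity) Set.univ
  change sphMeasure k Set.univ = 0 at h0
  rw [sphMeasure] at h0
  rw [h0, mul_zero, hm_fin] at h1
  have hO : IsOpen {x : Fin k → ℝ | ∑ i, x i ^ 2 < 1} :=
    isOpen_lt (by fun_prop) continuous_const
  have := hO.measure_pos volume ⟨0, by simp⟩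
  refine absurd (this.trans_le ((measure_mono ?_).trans h1)) (lt_irrefl _)
  intro x hx
  refine ⟨⟨capMap k x, capMap_mem k x (le_of_lt hx)⟩, mem_univ _, ?_⟩
  ext i
  exact capMap_castSucc k x i

/-- The normalized double-integral representation of the space-sphere K-function over an
arbitrary set `B` of positive finite volume; in particular the left-hand side does not
depend on the choice of `B`. -/
theorem ssK_eq_double_integral (d k : ℕ) (hd : 1 ≤ d) (hk : 1 ≤ k)
    (g₀ : Eucl d → ℝ → ℝ≥0∞) (hg₀ : Measurable (Function.uncurry g₀))
    (e : Sph k) (r : ℝ) (hr : 0 ≤ r) (s : ℝ) (hs₀ : 0 ≤ s) (hsπ : s ≤ π)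
    (B : Set (Eucl d)) (hB : MeasurableSet B) (hB₀ : 0 < volume B) (hB₁ : volume B < ⊤) :
    (∫⁻ p₁, (∫⁻ p₂,
        (if p₁.1 ∈ B ∧ ‖p₁.1 - p₂.1‖ ≤ r ∧ gd p₁.2 p₂.2 ≤ s then
          g₀ (p₁.1 - p₂.1) (gd p₁.2 p₂.2) else 0)
        ∂((volume : Measure (Eucl d)).prod (sphMeasure k)))
      ∂((volume : Measure (Eucl d)).prod (sphMeasure k)))
      / (volume B * sphMeasure k Set.univ) = ssK g₀ e r s := by
  have := sph_finite k
  let F : Eucl d → ℝ → ℝ≥0∞ := fun y t => if ‖y‖ ≤ r ∧ t ≤ s then g₀ y t else 0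
  have hF : Measurable (Function.uncurry F) := by
    have : MeasurableSet {p : Eucl d × ℝ | ‖p.1‖ ≤ r ∧ p.2 ≤ s} :=
      (measurableSet_le measurable_fst.norm measurable_const).inter
        (measurableSet_le measurable_snd measurable_const)
    exact Measurable.ite this hg₀ measurable_const
  have hgd : ∀ u : Sph k, Measurable fun v : Sph k => gd u v := by
    intro u
    unfold gd
    exact (Real.continuous_arccos.comp (by fun_prop)).measurable
  have hsymm : ∀ u v : Sph k, gd u v = gd v u := fun u v => by
    unfold gd; rw [real_inner_comm]
  have hK : ssK g₀ e r s = ∫⁻ y, ∫⁻ u, F y (gd e u) ∂(sphMeasure k) := by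
    unfold ssK
    rw [← lintegral_indicator (measurableSet_le (by fun_prop) (by fun_prop))]
    refine lintegral_congr fun y => ?_
    by_cases hy : ‖y‖ ≤ r
    · rw [indicator_of_mem (by exact hy), ← lintegral_indicator
        (measurableSet_le (by simpa only [hsymm _ e] using hgd e) (by fun_prop))]
      refine lintegral_congr fun u => ?_
      simp [F, hy, indicator, hsymm e u]
    · rw [indicator_of_notMem (by exact hy)]
      simp [F, hy]
  have hrot : ∀ (u₁ : Sph k) (y : Eucl d), ∫⁻ u, F y (gd u₁ u) ∂(sphMeasure k)
      = ∫⁻ u, F y (gd e u) ∂(sphMeasure k) := by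
    intro u₁ y
    obtain ⟨φ, h1, h2⟩ := sph_move k e u₁
    rw [← h1, ← (sph_mp k φ).lintegral_comp_emb φ.toHomeomorph.measurableEmbedding]
    refine lintegral_congr fun u => ?_
    rw [h2]
  have hin : ∀ (p₁ : Eucl d × Sph k), (∫⁻ p₂ : Eucl d × Sph k,
        (if p₁.1 ∈ B ∧ ‖p₁.1 - p₂.1‖ ≤ r ∧ gd p₁.2 p₂.2 ≤ s then
          g₀ (p₁.1 - p₂.1) (gd p₁.2 p₂.2) else 0)
        ∂((volume : Measure (Eucl d)).prod (sphMeasure k)))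
      = (B ×ˢ (Set.univ : Set (Sph k))).indicator (fun _ => ssK g₀ e r s) p₁ := by
    rintro ⟨y₁, u₁⟩
    by_cases hy : y₁ ∈ B
    · rw [indicator_of_mem (by simpa using hy), hK]
      have : ∀ p₂ : Eucl d × Sph k, (if y₁ ∈ B ∧ ‖y₁ - p₂.1‖ ≤ r ∧ gd u₁ p₂.2 ≤ s then
          g₀ (y₁ - p₂.1) (gd u₁ p₂.2) else 0) = F (y₁ - p₂.1) (gd u₁ p₂.2) := by
        intro p₂; simp [F, hy]
      simp only [this]
      rw [lintegral_prod]
      · simp only [hrot]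
        exact lintegral_sub_left_eq_self
          (fun y => ∫⁻ u, F y (gd e u) ∂(sphMeasure k)) y₁
      · have : Measurable fun p₂ : Eucl d × Sph k => (y₁ - p₂.1, gd u₁ p₂.2) :=
          (measurable_const.sub measurable_fst).prodMk ((hgd u₁).comp measurable_snd)
        exact (hF.comp this).aemeasurable
    · rw [indicator_of_notMem (by simpa using hy)]
      simp [hy]
  simp only [hin]
  rw [lintegral_indicator_const (hB.prod MeasurableSet.univ), Measure.prod_prod]
  refine ENNReal.mul_div_cancel_right ?_ ?_
  · exact mul_ne_zero hB₀.ne' (sph_pos k)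
  · exact ENNReal.mul_ne_top hB₁.ne (measure_ne_top _ _)
end
end

section
/- Let W ⊂ ℝ^d be a bounded measurable set and r ≥ 0 be such that |W ∩ (y + W)| > 0 for all y with ‖y‖ ≤ r, and let g₀₁ : ℝ^d → [0,∞] be measurable. Then ∫_W ∫_W 1{‖y₁−y₂‖ ≤ r} g₀₁(y₁−y₂) / |W ∩ ((y₁−y₂) + W)| dy₂ dy₁ = ∫_{‖y‖≤r} g₀₁(y) dy. (This is the unbiasedness of the translation-corrected estimator of the inhomogeneous spatial K-function, in deterministic Campbell form.) -/
open MeasureTheory Real Set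
open scoped ENNReal NNReal RealInnerProductSpace Classical

noncomputable section

/-- Unbiasedness of the translation-corrected estimator of the inhomogeneous spatial
K-function, in deterministic Campbell form. -/
theorem spatial_K_translation_estimator_unbiased (d : ℕ) (hd : 1 ≤ d)
    (W : Set (Eucl d)) (hWm : MeasurableSet W) (hWb : Bornology.IsBounded W)
    (r : ℝ) (hr : 0 ≤ r)
    (hpos : ∀ y : Eucl d, ‖y‖ ≤ r → 0 < volume (W ∩ ((fun z => y + z) '' W)))
    (g₀₁ : Eucl d → ℝ≥0∞) (hg : Measurable g₀₁) :
    (∫⁻ y₁ in W, ∫⁻ y₂ in W,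
        if ‖y₁ - y₂‖ ≤ r then
          g₀₁ (y₁ - y₂) / volume (W ∩ ((fun z => (y₁ - y₂) + z) '' W)) else 0)
      = ∫⁻ y in {y : Eucl d | ‖y‖ ≤ r}, g₀₁ y := by
  set V : Eucl d → ℝ≥0∞ := fun y => volume (W ∩ ((fun z => y + z) '' W)) with hV
  have himg : ∀ y : Eucl d, W ∩ ((fun z => y + z) '' W) = {z | z ∈ W ∧ z - y ∈ W} := by
    intro y
    ext z
    constructor
    · rintro ⟨h, w, hw, rfl⟩
      exact ⟨h, by simpa using hw⟩
    · rintro ⟨h, h2⟩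
      exact ⟨h, z - y, h2, by simp⟩
  have hS : MeasurableSet {p : Eucl d × Eucl d | p.2 ∈ W ∧ p.2 - p.1 ∈ W} :=
    (measurable_snd hWm).inter ((measurable_snd.sub measurable_fst) hWm)
  have hVm : Measurable V := by
    have h := measurable_measure_prodMk_left (ν := (volume : Measure (Eucl d))) hS
    convert h using 2 with y
    rw [hV]
    simp only [himg]
    rfl
  have hVtop : ∀ y, V y ≠ ∞ := fun y =>
    ((measure_mono inter_subset_left).trans_lt hWb.measure_lt_top).ne
  have hball : MeasurableSet {y : Eucl d | ‖y‖ ≤ r} := measurableSet_le measurable_norm measurable_const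
  set F : Eucl d → ℝ≥0∞ := fun y => if ‖y‖ ≤ r then g₀₁ y / V y else 0 with hF
  have hFm : Measurable F := Measurable.ite hball (hg.div hVm) measurable_const
  let I : Eucl d → ℝ≥0∞ := W.indicator 1
  have hI : Measurable I := measurable_one.indicator hWm
  have hmul : ∀ f : Eucl d → ℝ≥0∞, ∫⁻ y in W, f y = ∫⁻ y, I y * f y := by
    intro f
    rw [← lintegral_indicator hWm]
    congr 1
    ext y
    by_cases h : y ∈ W <;> simp [I, h]
  have hIV : ∀ y, ∫⁻ x, I x * I (x - y) = V y := by
    intro y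
    have hm : MeasurableSet {z | z ∈ W ∧ z - y ∈ W} :=
      hWm.inter ((measurable_id.sub_const y) hWm)
    rw [hV]
    simp only [himg]
    rw [← lintegral_indicator_one hm]
    congr 1
    ext x
    by_cases h : x ∈ W <;> by_cases h2 : x - y ∈ W <;> simp [I, h, h2, Set.indicator]
  calc (∫⁻ y₁ in W, ∫⁻ y₂ in W, F (y₁ - y₂))
      = ∫⁻ x, I x * ∫⁻ y, I y * F (x - y) := by
        rw [hmul]
        simp only [hmul]
    _ = ∫⁻ x, ∫⁻ y, I x * (I (x - y) * F y) := by
        congr 1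
        ext x
        rw [← lintegral_sub_left_eq_self (fun y => I y * F (x - y)) x, ← lintegral_const_mul]
        · simp
        · fun_prop
    _ = ∫⁻ y, ∫⁻ x, I x * (I (x - y) * F y) := by
        apply lintegral_lintegral_swap
        apply Measurable.aemeasurable
        unfold Function.uncurry
        fun_prop
    _ = ∫⁻ y, V y * F y := by
        congr 1
        ext y
        rw [← hIV, ← lintegral_mul_const]
        · simp only [mul_assoc]
        · fun_prop
    _ = ∫⁻ y in {y : Eucl d | ‖y‖ ≤ r}, g₀₁ y := by
        rw [← lintegral_indicator hball]
        congr 1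
        ext y
        by_cases h : ‖y‖ ≤ r
        · simp only [hF, h, if_true, Set.indicator, mem_setOf_eq]
          exact ENNReal.mul_div_cancel (hpos y h).ne' (hVtop y)
        · simp [hF, h]
end
end

section
/- Let W ⊂ ℝ^d be a bounded measurable set and r ≥ 0 be such that |W ∩ (y + W)| > 0 for all y with ‖y‖ ≤ r, let g₀ : ℝ^d × [0,π] → [0,∞] be measurable, let e ∈ S^k and s ∈ [0,π]. Then (1/σ_k) ∬_{(W×S^k)×(W×S^k)} 1{‖y₁−y₂‖ ≤ r, d(u₁,u₂) ≤ s} g₀(y₁−y₂, d(u₁,u₂)) / |W ∩ ((y₁−y₂) + W)| dμ(y₁,u₁) dμ(y₂,u₂) = K_e(r,s). (This is the unbiasedness of the translation-corrected estimator of the space-sphere K-function, in deterministic Campbell form.) -/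
open MeasureTheory Real Set
open scoped ENNReal NNReal RealInnerProductSpace Classical

noncomputable section

open scoped Topology

lemma finrank_orth_sph {k : ℕ} (x : Sph k) :
    Module.finrank ℝ (ℝ ∙ (x : EuclideanSpace ℝ (Fin (k+1))))ᗮ = k := by
  have : Fact (Module.finrank ℝ (EuclideanSpace ℝ (Fin (k+1))) = k + 1) := ⟨by simp⟩
  exact Submodule.finrank_orthogonal_span_singleton (ne_zero_of_mem_unit_sphere x)

lemma sphMeasure_finiteAt {k : ℕ} (x : Sph k) : (sphMeasure k).FiniteAtFilter (𝓝 x) := by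
  have hv : ‖((-x : Sph k) : EuclideanSpace ℝ (Fin (k+1)))‖ = 1 := by simp
  set v : EuclideanSpace ℝ (Fin (k+1)) := ((-x : Sph k) : EuclideanSpace ℝ (Fin (k+1))) with hvdef
  have hfr : Module.finrank ℝ (ℝ ∙ v)ᗮ = k := finrank_orth_sph (-x)
  have hH : (μH[k] : Measure (ℝ ∙ v)ᗮ).IsAddHaarMeasure := by
    have := isAddHaarMeasure_hausdorffMeasure (E := (ℝ ∙ v)ᗮ)
    rwa [hfr] at this
  have hx : x ∈ (stereographic hv).source := by
    simp only [stereographic_source, mem_compl_iff, mem_singleton_iff]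
    intro h
    have h2 : (x : EuclideanSpace ℝ (Fin (k+1))) = -x := by
      simpa [hvdef] using congrArg Subtype.val h
    have h4 : (2:ℝ) • (x : EuclideanSpace ℝ (Fin (k+1))) = 0 := by
      rw [two_smul]; nth_rewrite 1 [h2]; exact neg_add_cancel _
    exact ne_zero_of_mem_unit_sphere x ((smul_eq_zero.mp h4).resolve_left two_ne_zero)
  set w := stereographic hv x with hw
  have hcd : ContDiff ℝ 1 (stereoInvFunAux v ∘ ((↑) : (ℝ ∙ v)ᗮ → EuclideanSpace ℝ (Fin (k+1)))) :=
    contDiff_stereoInvFunAux.comp (ℝ ∙ v)ᗮ.subtypeL.contDiff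
  obtain ⟨K, t, ht, hL⟩ := hcd.contDiffAt (x := w) |>.exists_lipschitzOnWith
  have hL' : LipschitzOnWith K (stereoInvFun hv) (t ∩ Metric.ball w 1) := by
    intro a ha b hb
    exact hL ha.1 hb.1
  refine ⟨stereoInvFun hv '' (t ∩ Metric.ball w 1), ?_, ?_⟩
  · have h1 : w ∈ (stereographic hv).symm.source := by simp
    have := (stereographic hv).symm.image_mem_nhds h1
      (Filter.inter_mem ht (Metric.ball_mem_nhds w one_pos))
    rw [(stereographic hv).left_inv hx] at this
    exact this
  · refine (hL'.hausdorffMeasure_image_le (Nat.cast_nonneg k)).trans_lt ?_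
    refine ENNReal.mul_lt_top (by simp) ?_
    exact (measure_mono inter_subset_right).trans_lt measure_ball_lt_top

instance sphMeasure_finite (k : ℕ) : IsFiniteMeasure (sphMeasure k) :=
  ⟨isCompact_univ.measure_lt_top_of_nhdsWithin fun x _ => by
    rw [nhdsWithin_univ]; exact sphMeasure_finiteAt x⟩

lemma sphMeasure_pos {k : ℕ} (e : Sph k) : sphMeasure k univ ≠ 0 := by
  set v : EuclideanSpace ℝ (Fin (k+1)) := (e : EuclideanSpace ℝ (Fin (k+1))) with hvdef
  have hv : ‖v‖ = 1 := by simp [hvdef]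
  have hfr : Module.finrank ℝ (ℝ ∙ v)ᗮ = k := finrank_orth_sph e
  have hH : (μH[k] : Measure (ℝ ∙ v)ᗮ).IsAddHaarMeasure := by
    have := isAddHaarMeasure_hausdorffMeasure (E := (ℝ ∙ v)ᗮ)
    rwa [hfr] at this
  let P : Sph k → (ℝ ∙ v)ᗮ := fun u => (ℝ ∙ v)ᗮ.orthogonalProjectionOnto u
  have hP : LipschitzWith 1 P := by
    have h1 : LipschitzWith 1 ((ℝ ∙ v)ᗮ.orthogonalProjectionOnto) :=
      (ContinuousLinearMap.lipschitz _).weaken (by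
        exact_mod_cast Submodule.orthogonalProjectionOnto_norm_le (ℝ ∙ v)ᗮ)
    have := h1.comp (LipschitzWith.subtype_val (Metric.sphere (0 : EuclideanSpace ℝ (Fin (k+1))) 1))
    rw [mul_one] at this
    exact this
  have hsub : Metric.ball (0 : (ℝ ∙ v)ᗮ) 1 ⊆ P '' univ := by
    intro w hw
    have hw1 : ‖w‖ < 1 := by simpa using hw
    have hvw : ⟪(w : EuclideanSpace ℝ (Fin (k+1))), v⟫ = 0 :=
      Submodule.mem_orthogonal_singleton_iff_inner_left.mp w.2
    refine ⟨⟨(w : EuclideanSpace ℝ (Fin (k+1))) + √(1 - ‖w‖ ^ 2) • v, ?_⟩, trivial, ?_⟩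
    · have h0 : 0 ≤ 1 - ‖w‖ ^ 2 := by nlinarith [norm_nonneg w]
      rw [mem_sphere_zero_iff_norm]
      have : ‖(w : EuclideanSpace ℝ (Fin (k+1))) + √(1 - ‖w‖ ^ 2) • v‖ ^ 2 = 1 := by
        rw [norm_add_sq_real, inner_smul_right, hvw, norm_smul, hv, Real.norm_eq_abs, mul_one,
          sq_abs, Real.sq_sqrt h0, Submodule.coe_norm]
        ring
      exact (pow_eq_one_iff_of_nonneg (norm_nonneg _) two_ne_zero).mp this
    · simp only [P, map_add, map_smul,
        Submodule.orthogonalProjectionOnto_orthogonalComplement_singleton_eq_zero,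
        Submodule.orthogonalProjectionOnto_mem_subspace_eq_self, smul_zero, add_zero]
  intro h0
  have h1 := hP.hausdorffMeasure_image_le (Nat.cast_nonneg k) univ
  have h2 : (μH[k] : Measure (Sph k)) univ = 0 := h0
  rw [h2, mul_zero] at h1
  have h3 := (Metric.measure_ball_pos (μH[k] : Measure (ℝ ∙ v)ᗮ) 0 one_pos).trans_le
    ((measure_mono hsub).trans h1)
  exact lt_irrefl _ h3

lemma gd_comm {k : ℕ} (u v : Sph k) : gd u v = gd v u := by
  unfold gd; rw [real_inner_comm]

lemma continuous_gd {k : ℕ} : Continuous fun p : Sph k × Sph k => gd p.1 p.2 := by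
  unfold gd; fun_prop

lemma measurable_gd_left {k : ℕ} (e : Sph k) : Measurable fun u : Sph k => gd u e :=
  (continuous_gd.comp (by fun_prop : Continuous fun u : Sph k => (u, e))).measurable

/-- Rotation invariance. -/
lemma lintegral_gd_eq {k : ℕ} (h : ℝ → ℝ≥0∞) (hh : Measurable h) (v e : Sph k) :
    ∫⁻ u, h (gd u v) ∂(sphMeasure k) = ∫⁻ u, h (gd u e) ∂(sphMeasure k) := by
  let R := (ℝ ∙ ((v : EuclideanSpace ℝ (Fin (k+1))) - e))ᗮ.reflection
  have hRv : R v = e := Submodule.reflection_sub (by simp)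
  have hR2 : ∀ x, R (R x) = x := fun x => Submodule.reflection_reflection _ x
  let T : Sph k ≃ᵢ Sph k :=
    { toFun := fun u => ⟨R u, by simp⟩
      invFun := fun u => ⟨R u, by simp⟩
      left_inv := fun u => Subtype.ext (hR2 u)
      right_inv := fun u => Subtype.ext (hR2 u)
      isometry_toFun := fun a b => R.isometry _ _ }
  have hT : MeasurePreserving T (sphMeasure k) (sphMeasure k) :=
    T.measurePreserving_hausdorffMeasure k
  have hgd : ∀ u, gd (T u) e = gd u v := by
    intro u
    have : ⟪((T u : Sph k) : EuclideanSpace ℝ (Fin (k+1))), (e : EuclideanSpace ℝ (Fin (k+1)))⟫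
        = ⟪(u : EuclideanSpace ℝ (Fin (k+1))), (v : EuclideanSpace ℝ (Fin (k+1)))⟫ := by
      rw [← hRv]; exact R.inner_map_map _ _
    unfold gd; rw [this]
  have hm : Measurable fun u : Sph k => h (gd u e) :=
    hh.comp (continuous_gd.comp (by fun_prop : Continuous fun u : Sph k => (u, e))).measurable
  rw [← hT.lintegral_comp hm]
  simp only [hgd]

lemma image_add_eq {d : ℕ} (W : Set (Eucl d)) (y : Eucl d) :
    (fun z => y + z) '' W = {x | x - y ∈ W} := by
  ext x; constructor
  · rintro ⟨z, hz, rfl⟩; simpa using hz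
  · intro h; exact ⟨x - y, h, by simp⟩

lemma meas_shift_set {d : ℕ} (W : Set (Eucl d)) (hWm : MeasurableSet W) :
    MeasurableSet {p : Eucl d × Eucl d | p.2 ∈ W ∧ p.2 - p.1 ∈ W} :=
  (measurable_snd hWm).inter ((measurable_snd.sub measurable_fst) hWm)

lemma meas_V {d : ℕ} (W : Set (Eucl d)) (hWm : MeasurableSet W) :
    Measurable fun y : Eucl d => volume (W ∩ ((fun z => y + z) '' W)) := by
  have := measurable_measure_prodMk_left (ν := (volume : Measure (Eucl d))) (meas_shift_set W hWm)
  simp only [image_add_eq]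
  exact this

lemma lintegral_shift {d : ℕ} (W : Set (Eucl d)) (hWm : MeasurableSet W)
    (G : Eucl d → ℝ≥0∞) (hG : Measurable G) :
    ∫⁻ y₁ in W, ∫⁻ y₂ in W, G (y₁ - y₂) =
      ∫⁻ y, G y * volume (W ∩ ((fun z => y + z) '' W)) := by
  have hS := meas_shift_set W hWm
  have hF : Measurable fun p : Eucl d × Eucl d =>
      {p : Eucl d × Eucl d | p.2 ∈ W ∧ p.2 - p.1 ∈ W}.indicator (fun p => G p.1) p :=
    (hG.comp measurable_fst).indicator hS
  have e1 : ∫⁻ y₁ in W, ∫⁻ y₂ in W, G (y₁ - y₂) = ∫⁻ x, ∫⁻ y,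
      {p : Eucl d × Eucl d | p.2 ∈ W ∧ p.2 - p.1 ∈ W}.indicator (fun p => G p.1) (y, x) := by
    rw [← lintegral_indicator hWm]
    refine lintegral_congr fun x => ?_
    by_cases hx : x ∈ W
    · rw [indicator_of_mem hx, ← lintegral_indicator hWm,
        ← lintegral_sub_left_eq_self _ x]
      refine lintegral_congr fun y => ?_
      by_cases hy : x - y ∈ W <;> simp [indicator, hx, hy]
    · simp [indicator, hx]
  rw [e1, lintegral_lintegral_swap (by exact (hF.comp measurable_swap).aemeasurable)]
  refine lintegral_congr fun y => ?_
  have hSy : MeasurableSet (W ∩ ((fun z => y + z) '' W)) := by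
    rw [image_add_eq]; exact measurable_prodMk_left hS
  rw [← lintegral_indicator_const hSy]
  refine lintegral_congr fun x => ?_
  simp only [image_add_eq, indicator, mem_ofPred_eq, mem_inter_iff]

set_option maxHeartbeats 400000

/-- Unbiasedness of the translation-corrected estimator of the space-sphere K-function,
in deterministic Campbell form. -/
theorem ssK_translation_estimator_unbiased (d k : ℕ) (hd : 1 ≤ d) (hk : 1 ≤ k)
    (W : Set (Eucl d)) (hWm : MeasurableSet W) (hWb : Bornology.IsBounded W)
    (r : ℝ) (hr : 0 ≤ r)
    (hpos : ∀ y : Eucl d, ‖y‖ ≤ r → 0 < volume (W ∩ ((fun z => y + z) '' W)))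
    (g₀ : Eucl d → ℝ → ℝ≥0∞) (hg₀ : Measurable (Function.uncurry g₀))
    (e : Sph k) (s : ℝ) (hs₀ : 0 ≤ s) (hsπ : s ≤ π) :
    (∫⁻ p₁, (∫⁻ p₂,
        (if ‖p₁.1 - p₂.1‖ ≤ r ∧ gd p₁.2 p₂.2 ≤ s then
          g₀ (p₁.1 - p₂.1) (gd p₁.2 p₂.2)
            / volume (W ∩ ((fun z => (p₁.1 - p₂.1) + z) '' W)) else 0)
        ∂(((volume : Measure (Eucl d)).restrict W).prod (sphMeasure k)))
      ∂(((volume : Measure (Eucl d)).restrict W).prod (sphMeasure k)))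
      / sphMeasure k Set.univ = ssK g₀ e r s := by
  have hνfin : sphMeasure k univ ≠ ∞ := measure_ne_top _ _
  have hν0 : sphMeasure k univ ≠ 0 := sphMeasure_pos e
  have hV := meas_V W hWm
  set V : Eucl d → ℝ≥0∞ := fun y => volume (W ∩ ((fun z => y + z) '' W)) with hVdef
  obtain ⟨q, hqdef⟩ : ∃ q : Eucl d → ℝ → ℝ≥0∞,
      ∀ y t, q y t = if ‖y‖ ≤ r ∧ t ≤ s then g₀ y t / V y else 0 := ⟨_, fun _ _ => rfl⟩
  have hq : Measurable (Function.uncurry q) := by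
    have : Function.uncurry q = fun p : Eucl d × ℝ =>
        if ‖p.1‖ ≤ r ∧ p.2 ≤ s then Function.uncurry g₀ p / V p.1 else 0 := by
      funext p; exact hqdef _ _
    rw [this]
    refine Measurable.ite ?_ (hg₀.div (hV.comp measurable_fst)) measurable_const
    exact (measurableSet_le measurable_fst.norm measurable_const).inter
      (measurableSet_le measurable_snd measurable_const)
  have hgm : Measurable fun p : Sph k × Sph k => gd p.1 p.2 := continuous_gd.measurable
  let G : Eucl d → ℝ≥0∞ := fun y => ∫⁻ u, q y (gd u e) ∂(sphMeasure k)
  have hG : Measurable G := by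
    refine Measurable.lintegral_prod_right' (f := fun p : Eucl d × Sph k => q p.1 (gd p.2 e)) ?_
    exact hq.comp (measurable_fst.prodMk
      (hgm.comp (measurable_snd.prodMk measurable_const)))
  have hin : ∀ p₁ : Eucl d × Sph k, (∫⁻ p₂ : Eucl d × Sph k,
      (if ‖p₁.1 - p₂.1‖ ≤ r ∧ gd p₁.2 p₂.2 ≤ s then
          g₀ (p₁.1 - p₂.1) (gd p₁.2 p₂.2)
            / volume (W ∩ ((fun z => (p₁.1 - p₂.1) + z) '' W)) else 0)
        ∂(((volume : Measure (Eucl d)).restrict W).prod (sphMeasure k)))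
      = ∫⁻ y₂ in W, G (p₁.1 - y₂) := by
    intro p₁
    have hm : Measurable fun p₂ : Eucl d × Sph k => q (p₁.1 - p₂.1) (gd p₁.2 p₂.2) :=
      hq.comp ((measurable_const.sub measurable_fst).prodMk
        (hgm.comp (measurable_const.prodMk measurable_snd)))
    have e0 : ∀ p₂ : Eucl d × Sph k, (if ‖p₁.1 - p₂.1‖ ≤ r ∧ gd p₁.2 p₂.2 ≤ s then
          g₀ (p₁.1 - p₂.1) (gd p₁.2 p₂.2)
            / volume (W ∩ ((fun z => (p₁.1 - p₂.1) + z) '' W)) else 0)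
        = q (p₁.1 - p₂.1) (gd p₁.2 p₂.2) := fun p₂ => (hqdef _ _).symm
    rw [lintegral_congr e0, lintegral_prod _ hm.aemeasurable]
    refine lintegral_congr fun y₂ => ?_
    simp only [gd_comm p₁.2]
    exact lintegral_gd_eq (q (p₁.1 - y₂)) (hq.comp measurable_prodMk_left) p₁.2 e
  simp only [hin]
  have hm2 : Measurable fun y₁ : Eucl d => ∫⁻ y₂ in W, G (y₁ - y₂) := by
    refine Measurable.lintegral_prod_right' (f := fun p : Eucl d × Eucl d => G (p.1 - p.2)) ?_
    exact hG.comp (measurable_fst.sub measurable_snd)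
  rw [lintegral_prod (fun p : Eucl d × Sph k => ∫⁻ y₂ in W, G (p.1 - y₂))
    (hm2.comp measurable_fst).aemeasurable]
  simp only [lintegral_const]
  rw [lintegral_mul_const _ hm2, ENNReal.mul_div_cancel_right hν0 hνfin,
    lintegral_shift W hWm G hG]
  unfold ssK
  have hBr : MeasurableSet {y : Eucl d | ‖y‖ ≤ r} := measurableSet_le measurable_norm measurable_const
  rw [← lintegral_indicator hBr]
  refine lintegral_congr fun y => ?_
  by_cases hy : ‖y‖ ≤ r
  · rw [indicator_of_mem (show y ∈ {y : Eucl d | ‖y‖ ≤ r} from hy)]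
    have hV0 : V y ≠ 0 := (hpos y hy).ne'
    have hVt : V y ≠ ∞ :=
      ((measure_mono inter_subset_left).trans_lt hWb.measure_lt_top).ne
    have hBs : MeasurableSet {u : Sph k | gd u e ≤ s} :=
      measurableSet_le (measurable_gd_left e) measurable_const
    rw [← lintegral_indicator hBs]
    change (∫⁻ u, q y (gd u e) ∂(sphMeasure k)) * V y = _
    rw [← lintegral_mul_const]
    · refine lintegral_congr fun u => ?_
      by_cases hu : gd u e ≤ s
      · simp [hqdef, hy, hu, indicator, ENNReal.div_mul_cancel hV0 hVt]
      · simp [hqdef, hu, indicator]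
    · exact hq.comp (measurable_const.prodMk (measurable_gd_left e))
  · rw [indicator_of_notMem (show y ∉ {y : Eucl d | ‖y‖ ≤ r} from hy)]
    simp [G, hqdef, hy]
end
end

section
/- The following are equivalent: (i) there exist measurable functions f₁ : ℝ^d → [0,∞) and f₂ : S^k → [0,∞) such that ρ(y,u) = f₁(y)f₂(u) for all (y,u) ∈ ℝ^d × S^k (first order separability); (ii) ρ(y,u)·E(N) = ρ₁(y)·ρ₂(u) for all (y,u) ∈ ℝ^d × S^k. -/
open MeasureTheory Real Set
open scoped ENNReal NNReal RealInnerProductSpace Classical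

noncomputable section

variable {d k : ℕ}

/-- The product measure `μ` on `ℝ^d × S^k` restricted to `W × S^k`. -/
noncomputable def muW (W : Set (Eucl d)) (k : ℕ) : Measure (Eucl d × Sph k) :=
  ((volume : Measure (Eucl d)).restrict W).prod (sphMeasure k)

/-- Marginal spatial intensity `ρ₁(y) = ∫_{S^k} ρ(y,u) dν(u)`. -/
noncomputable def rho1 (ρ : Eucl d × Sph k → ℝ≥0) (y : Eucl d) : ℝ≥0∞ :=
  ∫⁻ u, (ρ (y, u) : ℝ≥0∞) ∂(sphMeasure k)

/-- Marginal spherical intensity `ρ₂(u) = ∫_W ρ(y,u) dy`. -/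
noncomputable def rho2 (W : Set (Eucl d)) (ρ : Eucl d × Sph k → ℝ≥0) (u : Sph k) : ℝ≥0∞ :=
  ∫⁻ y in W, (ρ (y, u) : ℝ≥0∞)

/-- The expected number of points `E(N) = ∫_{W × S^k} ρ dμ`. -/
noncomputable def meanN (W : Set (Eucl d)) (ρ : Eucl d × Sph k → ℝ≥0) : ℝ≥0∞ :=
  ∫⁻ p, (ρ p : ℝ≥0∞) ∂(muW W k)

/-- The pair correlation function `g₁` of the spatial components. -/
noncomputable def gfun1 (ρ : Eucl d × Sph k → ℝ≥0)
    (g : Eucl d × Sph k → Eucl d × Sph k → ℝ≥0) (y₁ y₂ : Eucl d) : ℝ≥0∞ :=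
  if 0 < rho1 ρ y₁ * rho1 ρ y₂ then
    (∫⁻ u₁, (∫⁻ u₂, ((ρ (y₁, u₁) : ℝ≥0∞) * (ρ (y₂, u₂) : ℝ≥0∞) *
        (g (y₁, u₁) (y₂, u₂) : ℝ≥0∞)) ∂(sphMeasure k)) ∂(sphMeasure k))
      / (rho1 ρ y₁ * rho1 ρ y₂)
  else 0

/-- The pair correlation function `g₂` of the spherical components. -/
noncomputable def gfun2 (W : Set (Eucl d)) (ρ : Eucl d × Sph k → ℝ≥0)
    (g : Eucl d × Sph k → Eucl d × Sph k → ℝ≥0) (u₁ u₂ : Sph k) : ℝ≥0∞ :=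
  if 0 < rho2 W ρ u₁ * rho2 W ρ u₂ then
    (∫⁻ y₁ in W, ∫⁻ y₂ in W, ((ρ (y₁, u₁) : ℝ≥0∞) * (ρ (y₂, u₂) : ℝ≥0∞) *
        (g (y₁, u₁) (y₂, u₂) : ℝ≥0∞)))
      / (rho2 W ρ u₁ * rho2 W ρ u₂)
  else 0

/-- The second factorial moment `E{N(N−1)}`. -/
noncomputable def momN2 (W : Set (Eucl d)) (ρ : Eucl d × Sph k → ℝ≥0)
    (g : Eucl d × Sph k → Eucl d × Sph k → ℝ≥0) : ℝ≥0∞ :=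
  ∫⁻ p, (∫⁻ q, ((ρ p : ℝ≥0∞) * (ρ q : ℝ≥0∞) * (g p q : ℝ≥0∞)) ∂(muW W k)) ∂(muW W k)

/-- The constant `β = E(N)² / E{N(N−1)}`. -/
noncomputable def betaC (W : Set (Eucl d)) (ρ : Eucl d × Sph k → ℝ≥0)
    (g : Eucl d × Sph k → Eucl d × Sph k → ℝ≥0) : ℝ≥0∞ :=
  (meanN W ρ) ^ 2 / momN2 W ρ g

theorem sphMeasure_sigmaFinite (k : ℕ) (hk : 1 ≤ k) : SigmaFinite (sphMeasure k) := by
  set v : EuclideanSpace ℝ (Fin (k+1)) := EuclideanSpace.single 0 1 with hvdef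
  have hv : ‖v‖ = 1 := by simp [hvdef]
  have hv0 : v ≠ 0 := by
    intro h
    simp [h] at hv
  have : Fact (Module.finrank ℝ (EuclideanSpace ℝ (Fin (k+1))) = k + 1) := ⟨by simp⟩
  have hfin : Module.finrank ℝ (Submodule.span ℝ {v})ᗮ = k :=
    Submodule.finrank_orthogonal_span_singleton hv0
  have hhaar : (μH[(k : ℝ)] : Measure (Submodule.span ℝ {v})ᗮ).IsAddHaarMeasure := by
    have := isAddHaarMeasure_hausdorffMeasure (E := (Submodule.span ℝ {v})ᗮ)
    rwa [hfin] at this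
  have hC : ContDiff ℝ 1 (fun w : (Submodule.span ℝ {v})ᗮ => stereoInvFunAux v (w : _)) :=
    contDiff_stereoInvFunAux.comp (Submodule.span ℝ {v})ᗮ.subtypeL.contDiff
  have hball : ∀ n : ℕ, sphMeasure k
      (stereoInvFun hv '' Metric.closedBall (0 : (Submodule.span ℝ {v})ᗮ) n) < ⊤ := by
    intro n
    have hcpt : IsCompact (Metric.closedBall (0 : (Submodule.span ℝ {v})ᗮ) n) :=
      isCompact_closedBall _ _
    obtain ⟨K, hK⟩ := (hC.locallyLipschitz.locallyLipschitzOn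
      (s := Metric.closedBall (0 : (Submodule.span ℝ {v})ᗮ) n)).exists_lipschitzOnWith_of_compact
        hcpt
    have hK' : LipschitzOnWith K (stereoInvFun hv)
        (Metric.closedBall (0 : (Submodule.span ℝ {v})ᗮ) n) := fun x hx y hy => hK hx hy
    refine (hK'.hausdorffMeasure_image_le (Nat.cast_nonneg k)).trans_lt ?_
    exact ENNReal.mul_lt_top (ENNReal.rpow_lt_top_of_nonneg (Nat.cast_nonneg k) (by simp))
      hcpt.measure_lt_top
  have hkpos : (0 : ℝ) < k := by exact_mod_cast hk
  have : NullSingletonClass (sphMeasure k) := Measure.nullSingletonClass_hausdorff _ hkpos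
  refine ⟨⟨⟨fun n => {⟨v, by simp [hv]⟩} ∪
    stereoInvFun hv '' Metric.closedBall (0 : (Submodule.span ℝ {v})ᗮ) n,
    fun _ => trivial, fun n => ?_, ?_⟩⟩⟩
  · refine (measure_union_le _ _).trans_lt ?_
    rw [measure_singleton, zero_add]
    exact hball n
  · refine eq_univ_of_forall fun x => mem_iUnion.2 ?_
    by_cases hx : (x : EuclideanSpace ℝ (Fin (k+1))) = v
    · exact ⟨0, Or.inl (Subtype.ext hx)⟩
    · obtain ⟨n, hn⟩ := exists_nat_ge ‖stereoToFun v (x : EuclideanSpace ℝ (Fin (k+1)))‖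
      exact ⟨n, Or.inr ⟨_, mem_closedBall_zero_iff.2 hn, stereo_left_inv hv hx⟩⟩

/-- First order separability `ρ(y,u) = f₁(y)f₂(u)` is equivalent to
`ρ(y,u)·E(N) = ρ₁(y)·ρ₂(u)`. -/
theorem first_order_separability_iff (d k : ℕ) (hd : 1 ≤ d) (hk : 1 ≤ k)
    (W : Set (Eucl d)) (hWm : MeasurableSet W) (hWb : Bornology.IsBounded W)
    (ρ : Eucl d × Sph k → ℝ≥0) (hρ : Measurable ρ)
    (hEN₀ : 0 < meanN W ρ) (hEN₁ : meanN W ρ < ⊤) :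
    (∃ (f₁ : Eucl d → ℝ≥0) (f₂ : Sph k → ℝ≥0), Measurable f₁ ∧ Measurable f₂ ∧
        ∀ (y : Eucl d) (u : Sph k), ρ (y, u) = f₁ y * f₂ u) ↔
      (∀ (y : Eucl d) (u : Sph k),
        (ρ (y, u) : ℝ≥0∞) * meanN W ρ = rho1 ρ y * rho2 W ρ u) := by
  have := sphMeasure_sigmaFinite k hk
  constructor
  · rintro ⟨f₁, f₂, h₁, h₂, h⟩ y u
    have hE : meanN W ρ = (∫⁻ y in W, (f₁ y : ℝ≥0∞)) * ∫⁻ u, (f₂ u : ℝ≥0∞) ∂(sphMeasure k) := by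
      unfold meanN muW
      rw [← lintegral_prod_mul h₁.coe_nnreal_ennreal.aemeasurable
        h₂.coe_nnreal_ennreal.aemeasurable]
      refine lintegral_congr fun p => ?_
      rw [← ENNReal.coe_mul, ← h p.1 p.2]
    have hr1 : rho1 ρ y = f₁ y * ∫⁻ u, (f₂ u : ℝ≥0∞) ∂(sphMeasure k) := by
      unfold rho1
      rw [← lintegral_const_mul _ h₂.coe_nnreal_ennreal]
      exact lintegral_congr fun u => by rw [h, ENNReal.coe_mul]
    have hr2 : rho2 W ρ u = (∫⁻ y in W, (f₁ y : ℝ≥0∞)) * f₂ u := by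
      unfold rho2
      rw [← lintegral_mul_const _ h₁.coe_nnreal_ennreal]
      exact lintegral_congr fun y => by rw [h, ENNReal.coe_mul]
    rw [hE, hr1, hr2, h, ENNReal.coe_mul]
    ring
  · intro h
    obtain ⟨⟨y₀, u₀⟩, h0⟩ : ∃ p, ρ p ≠ 0 := by
      by_contra! hc
      simp [meanN, hc] at hEN₀
    refine ⟨fun y => ρ (y, u₀), fun u => ρ (y₀, u) / ρ (y₀, u₀), by fun_prop, by fun_prop, ?_⟩
    intro y u
    have key : (ρ (y, u) : ℝ≥0∞) * ρ (y₀, u₀) = ρ (y, u₀) * ρ (y₀, u) := by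
      have hE : meanN W ρ * meanN W ρ ≠ 0 := mul_ne_zero hEN₀.ne' hEN₀.ne'
      have hE' : meanN W ρ * meanN W ρ ≠ ⊤ := ENNReal.mul_ne_top hEN₁.ne hEN₁.ne
      rw [← ENNReal.mul_left_inj hE hE']
      calc (ρ (y, u) : ℝ≥0∞) * ρ (y₀, u₀) * (meanN W ρ * meanN W ρ)
          = (ρ (y, u) * meanN W ρ) * (ρ (y₀, u₀) * meanN W ρ) := by ring
        _ = (ρ (y, u₀) * meanN W ρ) * (ρ (y₀, u) * meanN W ρ) := by
            rw [h, h, h, h]; ring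
        _ = _ := by ring
    have key' : ρ (y, u) * ρ (y₀, u₀) = ρ (y, u₀) * ρ (y₀, u) := by exact_mod_cast key
    rw [← mul_div_assoc, ← key', mul_div_cancel_right₀ _ h0]
end
end

section
/- Assume ρ is first order separable, i.e. ρ(y,u)·E(N) = ρ₁(y)ρ₂(u) for all (y,u), and assume there is a measurable g₀ : ℝ^d × [0,π] → [0,∞) such that g(y₁,u₁,y₂,u₂) = g₀(y₁−y₂, d(u₁,u₂)) whenever ρ(y₁,u₁)ρ(y₂,u₂) > 0 (second order intensity-reweighted stationarity). Then for all y₁, y₂ ∈ ℝ^d with ρ₁(y₁)ρ₁(y₂) > 0, g₁(y₁,y₂) = ∬_{S^k×S^k} (ρ₂(u₁)/E(N)) (ρ₂(u₂)/E(N)) g₀(y₁−y₂, d(u₁,u₂)) dν(u₁) dν(u₂); in particular, on the set where ρ₁(y₁)ρ₁(y₂) > 0 the function g₁(y₁,y₂) depends on (y₁,y₂) only through the difference y₁ − y₂. -/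
open MeasureTheory Real Set
open scoped ENNReal NNReal RealInnerProductSpace Classical

noncomputable section

variable {d k : ℕ}

/-- Under first order separability and second order intensity-reweighted stationarity,
the pair correlation function of the spatial components is
`g₁(y₁,y₂) = ∬ (ρ₂(u₁)/E(N))(ρ₂(u₂)/E(N)) g₀(y₁−y₂, d(u₁,u₂)) dν(u₁)dν(u₂)`;
in particular, where `ρ₁(y₁)ρ₁(y₂) > 0`, `g₁` depends only on `y₁ − y₂`. -/
theorem gfun1_formula_of_soirs (d k : ℕ) (hd : 1 ≤ d) (hk : 1 ≤ k)
    (W : Set (Eucl d)) (hWm : MeasurableSet W) (hWb : Bornology.IsBounded W)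
    (ρ : Eucl d × Sph k → ℝ≥0) (hρ : Measurable ρ)
    (hEN₀ : 0 < meanN W ρ) (hEN₁ : meanN W ρ < ⊤)
    (hsep1 : ∀ (y : Eucl d) (u : Sph k),
      (ρ (y, u) : ℝ≥0∞) * meanN W ρ = rho1 ρ y * rho2 W ρ u)
    (g : Eucl d × Sph k → Eucl d × Sph k → ℝ≥0)
    (hg : Measurable (Function.uncurry g))
    (hg0 : ∀ p q : Eucl d × Sph k, ρ p * ρ q = 0 → g p q = 0)
    (g₀ : Eucl d → ℝ → ℝ≥0) (hg₀ : Measurable (Function.uncurry g₀))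
    (hsoirs : ∀ (y₁ y₂ : Eucl d) (u₁ u₂ : Sph k), 0 < ρ (y₁, u₁) * ρ (y₂, u₂) →
      g (y₁, u₁) (y₂, u₂) = g₀ (y₁ - y₂) (gd u₁ u₂)) :
    (∀ y₁ y₂ : Eucl d, 0 < rho1 ρ y₁ * rho1 ρ y₂ →
        gfun1 ρ g y₁ y₂ =
          ∫⁻ u₁, (∫⁻ u₂, (rho2 W ρ u₁ / meanN W ρ) * (rho2 W ρ u₂ / meanN W ρ) *
            (g₀ (y₁ - y₂) (gd u₁ u₂) : ℝ≥0∞) ∂(sphMeasure k)) ∂(sphMeasure k)) ∧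
      (∀ y₁ y₂ y₁' y₂' : Eucl d, 0 < rho1 ρ y₁ * rho1 ρ y₂ →
        0 < rho1 ρ y₁' * rho1 ρ y₂' → y₁ - y₂ = y₁' - y₂' →
          gfun1 ρ g y₁ y₂ = gfun1 ρ g y₁' y₂') := by
  have hE0 : meanN W ρ ≠ 0 := hEN₀.ne'
  have hE1 : meanN W ρ ≠ ⊤ := hEN₁.ne
  -- `ρ₁` is automatically finite
  have hfin : ∀ y : Eucl d, rho1 ρ y ≠ ⊤ := by
    intro y hy
    have h2 : ∀ u, rho2 W ρ u = 0 := by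
      intro u
      by_contra hne
      have h := hsep1 y u
      rw [hy, ENNReal.top_mul hne] at h
      exact ENNReal.mul_ne_top ENNReal.coe_ne_top hE1 h
    have h3 : ∀ u, (ρ (y, u) : ℝ≥0∞) = 0 := by
      intro u
      have h := hsep1 y u
      rw [h2 u, mul_zero] at h
      exact (mul_eq_zero.mp h).resolve_right hE0
    have h4 : rho1 ρ y = 0 := by
      unfold rho1
      simp only [h3, lintegral_zero]
    rw [h4] at hy
    exact ENNReal.zero_ne_top hy
  have hratio : ∀ (y : Eucl d) (u : Sph k), rho1 ρ y ≠ 0 →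
      rho2 W ρ u / meanN W ρ = (ρ (y, u) : ℝ≥0∞) * (rho1 ρ y)⁻¹ := by
    intro y u hy
    refine (ENNReal.eq_div_iff hE0 hE1).mpr ?_ |>.symm
    symm
    calc rho2 W ρ u = ((rho1 ρ y)⁻¹ * rho1 ρ y) * rho2 W ρ u := by
          rw [ENNReal.inv_mul_cancel hy (hfin y), one_mul]
      _ = (rho1 ρ y)⁻¹ * (rho1 ρ y * rho2 W ρ u) := by rw [mul_assoc]
      _ = (rho1 ρ y)⁻¹ * ((ρ (y, u) : ℝ≥0∞) * meanN W ρ) := by rw [hsep1 y u]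
      _ = meanN W ρ * ((ρ (y, u) : ℝ≥0∞) * (rho1 ρ y)⁻¹) := by ring
  have key : ∀ y₁ y₂ : Eucl d, 0 < rho1 ρ y₁ * rho1 ρ y₂ →
        gfun1 ρ g y₁ y₂ =
          ∫⁻ u₁, (∫⁻ u₂, (rho2 W ρ u₁ / meanN W ρ) * (rho2 W ρ u₂ / meanN W ρ) *
            (g₀ (y₁ - y₂) (gd u₁ u₂) : ℝ≥0∞) ∂(sphMeasure k)) ∂(sphMeasure k) := by
    intro y₁ y₂ hpos
    have hne := hpos.ne'
    have hy₁ : rho1 ρ y₁ ≠ 0 := left_ne_zero_of_mul hne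
    have hy₂ : rho1 ρ y₂ ≠ 0 := right_ne_zero_of_mul hne
    have hc : (rho1 ρ y₁ * rho1 ρ y₂)⁻¹ ≠ ⊤ := ENNReal.inv_ne_top.mpr hne
    unfold gfun1
    rw [if_pos hpos, div_eq_mul_inv, ← lintegral_mul_const' _ _ hc]
    refine lintegral_congr fun u₁ => ?_
    rw [← lintegral_mul_const' _ _ hc]
    refine lintegral_congr fun u₂ => ?_
    rw [hratio y₁ u₁ hy₁, hratio y₂ u₂ hy₂,
      ENNReal.mul_inv (Or.inl hy₁) (Or.inl (hfin y₁))]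
    rcases eq_or_ne (ρ (y₁, u₁) * ρ (y₂, u₂)) 0 with h0 | h0
    · rcases mul_eq_zero.mp h0 with h | h <;> simp [h]
    · rw [hsoirs y₁ y₂ u₁ u₂ (pos_iff_ne_zero.mpr h0)]
      ring
  refine ⟨key, ?_⟩
  intro y₁ y₂ y₁' y₂' h h' heq
  rw [key y₁ y₂ h, key y₁' y₂' h', heq]
end
end

section
/- Assume ρ is first order separable, i.e. ρ(y,u)·E(N) = ρ₁(y)ρ₂(u) for all (y,u), and assume there is a measurable g₀ : ℝ^d × [0,π] → [0,∞) such that g(y₁,u₁,y₂,u₂) = g₀(y₁−y₂, d(u₁,u₂)) whenever ρ(y₁,u₁)ρ(y₂,u₂) > 0 (second order intensity-reweighted stationarity). Then for all u₁, u₂ ∈ S^k with ρ₂(u₁)ρ₂(u₂) > 0, g₂(u₁,u₂) = ∫_W ∫_W (ρ₁(y₁)/E(N)) (ρ₁(y₂)/E(N)) g₀(y₁−y₂, d(u₁,u₂)) dy₁ dy₂; in particular, on the set where ρ₂(u₁)ρ₂(u₂) > 0 the function g₂(u₁,u₂) depends on (u₁,u₂) only through the geodesic distance d(u₁,u₂).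 -/
open MeasureTheory Real Set
open scoped ENNReal NNReal RealInnerProductSpace Classical

noncomputable section

variable {d k : ℕ}

/-- Under first order separability and second order intensity-reweighted stationarity,
the pair correlation function of the spherical components is
`g₂(u₁,u₂) = ∫_W∫_W (ρ₁(y₁)/E(N))(ρ₁(y₂)/E(N)) g₀(y₁−y₂, d(u₁,u₂)) dy₁dy₂`;
in particular, where `ρ₂(u₁)ρ₂(u₂) > 0`, `g₂` depends only on `d(u₁,u₂)`. -/
theorem gfun2_formula_of_soirs (d k : ℕ) (hd : 1 ≤ d) (hk : 1 ≤ k)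
    (W : Set (Eucl d)) (hWm : MeasurableSet W) (hWb : Bornology.IsBounded W)
    (ρ : Eucl d × Sph k → ℝ≥0) (hρ : Measurable ρ)
    (hEN₀ : 0 < meanN W ρ) (hEN₁ : meanN W ρ < ⊤)
    (hsep1 : ∀ (y : Eucl d) (u : Sph k),
      (ρ (y, u) : ℝ≥0∞) * meanN W ρ = rho1 ρ y * rho2 W ρ u)
    (g : Eucl d × Sph k → Eucl d × Sph k → ℝ≥0)
    (hg : Measurable (Function.uncurry g))
    (hg0 : ∀ p q : Eucl d × Sph k, ρ p * ρ q = 0 → g p q = 0)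
    (g₀ : Eucl d → ℝ → ℝ≥0) (hg₀ : Measurable (Function.uncurry g₀))
    (hsoirs : ∀ (y₁ y₂ : Eucl d) (u₁ u₂ : Sph k), 0 < ρ (y₁, u₁) * ρ (y₂, u₂) →
      g (y₁, u₁) (y₂, u₂) = g₀ (y₁ - y₂) (gd u₁ u₂)) :
    (∀ u₁ u₂ : Sph k, 0 < rho2 W ρ u₁ * rho2 W ρ u₂ →
        gfun2 W ρ g u₁ u₂ =
          ∫⁻ y₁ in W, ∫⁻ y₂ in W, (rho1 ρ y₁ / meanN W ρ) * (rho1 ρ y₂ / meanN W ρ) *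
            (g₀ (y₁ - y₂) (gd u₁ u₂) : ℝ≥0∞)) ∧
      (∀ u₁ u₂ u₁' u₂' : Sph k, 0 < rho2 W ρ u₁ * rho2 W ρ u₂ →
        0 < rho2 W ρ u₁' * rho2 W ρ u₂' → gd u₁ u₂ = gd u₁' u₂' →
          gfun2 W ρ g u₁ u₂ = gfun2 W ρ g u₁' u₂') := by
  have hfin : ∀ u : Sph k, rho2 W ρ u ≠ ⊤ := by
    intro u hu
    have hz : ∀ y, (ρ (y, u) : ℝ≥0∞) = 0 := by
      intro y
      have h := hsep1 y u
      have hlt : (ρ (y, u) : ℝ≥0∞) * meanN W ρ ≠ ⊤ :=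
        ENNReal.mul_ne_top ENNReal.coe_ne_top hEN₁.ne
      have h1 : rho1 ρ y = 0 := by
        by_contra hne
        rw [h, hu, ENNReal.mul_top hne] at hlt
        exact hlt rfl
      rw [h1, zero_mul] at h
      exact (mul_eq_zero.mp h).resolve_right hEN₀.ne'
    have h0 : rho2 W ρ u = 0 := by
      unfold rho2
      simp only [hz, lintegral_zero]
    rw [h0] at hu
    exact ENNReal.zero_ne_top hu
  have hrat : ∀ (y : Eucl d) (u : Sph k), rho2 W ρ u ≠ 0 →
      (ρ (y, u) : ℝ≥0∞) * (rho2 W ρ u)⁻¹ = rho1 ρ y / meanN W ρ := by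
    intro y u hu
    rw [ENNReal.eq_div_iff hEN₀.ne' hEN₁.ne, ← mul_assoc, mul_comm (meanN W ρ), hsep1 y u,
      mul_assoc, ENNReal.mul_inv_cancel hu (hfin u), mul_one]
  have main : ∀ u₁ u₂ : Sph k, 0 < rho2 W ρ u₁ * rho2 W ρ u₂ →
        gfun2 W ρ g u₁ u₂ =
          ∫⁻ y₁ in W, ∫⁻ y₂ in W, (rho1 ρ y₁ / meanN W ρ) * (rho1 ρ y₂ / meanN W ρ) *
            (g₀ (y₁ - y₂) (gd u₁ u₂) : ℝ≥0∞) := by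
    intro u₁ u₂ h
    have h1 : rho2 W ρ u₁ ≠ 0 := fun e => by simp [e] at h
    have h2 : rho2 W ρ u₂ ≠ 0 := fun e => by simp [e] at h
    have hc : (rho2 W ρ u₁ * rho2 W ρ u₂)⁻¹ ≠ ⊤ := ENNReal.inv_ne_top.mpr h.ne'
    unfold gfun2
    rw [if_pos h, div_eq_mul_inv, ← lintegral_mul_const' _ _ hc]
    refine lintegral_congr fun y₁ => ?_
    rw [← lintegral_mul_const' _ _ hc]
    refine lintegral_congr fun y₂ => ?_
    rw [← hrat y₁ u₁ h1, ← hrat y₂ u₂ h2,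
      ENNReal.mul_inv (Or.inl h1) (Or.inl (hfin u₁))]
    rcases eq_or_ne (ρ (y₁, u₁) * ρ (y₂, u₂)) 0 with h0 | h0
    · rcases mul_eq_zero.mp h0 with h0 | h0 <;> simp [h0]
    · rw [hsoirs y₁ y₂ u₁ u₂ (pos_iff_ne_zero.mpr h0)]
      ring
  refine ⟨main, fun u₁ u₂ u₁' u₂' h h' e => ?_⟩
  rw [main _ _ h, main _ _ h', e]
end
end

section
/- Assume: ρ : ℝ^d × S^k → (0,∞) is measurable and first order separable, i.e. ρ(y,u)·E(N) = ρ₁(y)ρ₂(u) for all (y,u); g₀ : ℝ^d × [0,π] → [0,∞) is measurable and g(y₁,u₁,y₂,u₂) = g₀(y₁−y₂, d(u₁,u₂)) for all arguments (second order intensity-reweighted stationarity); there exist measurable k₁ : ℝ^d×ℝ^d → [0,∞) and k₂ : S^k×S^k → [0,∞) with g(y₁,u₁,y₂,u₂) = k₁(y₁,y₂)k₂(u₁,u₂) for all arguments (second order separability); and 0 < E{N(N−1)} < ∞. Then there exist measurable g₀₁ : ℝ^d → [0,∞) and g₀₂ : [0,π] → [0,∞) with g₁(y₁,y₂) = g₀₁(y₁−y₂)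 and g₂(u₁,u₂) = g₀₂(d(u₁,u₂)) for all arguments, and for every e ∈ S^k, every r ≥ 0 and every s ∈ [0,π], the space-sphere K-function factorizes as K_e(r,s) = β·K₁(r)·K₂(s), where K₁(r) = ∫_{‖y‖≤r} g₀₁(y) dy and K₂(s) = ∫_{d(u,e)≤s} g₀₂(d(u,e)) dν(u). -/
open MeasureTheory Real Set
open scoped ENNReal NNReal RealInnerProductSpace Classical

noncomputable section

variable {d k : ℕ}

/-- Under SOIRS together with first and second order separability, the projected pair
correlation functions `g₁` and `g₂` have stationary/isotropic forms `g₀₁` and `g₀₂`, and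
the space-sphere K-function factorizes as `K(r,s) = β·K₁(r)·K₂(s)`. -/
theorem ssK_factorization (d k : ℕ) (hd : 1 ≤ d) (hk : 1 ≤ k)
    (W : Set (Eucl d)) (hWm : MeasurableSet W) (hWb : Bornology.IsBounded W)
    (ρ : Eucl d × Sph k → ℝ≥0) (hρ : Measurable ρ) (hρpos : ∀ p, 0 < ρ p)
    (hEN₀ : 0 < meanN W ρ) (hEN₁ : meanN W ρ < ⊤)
    (hsep1 : ∀ (y : Eucl d) (u : Sph k),
      (ρ (y, u) : ℝ≥0∞) * meanN W ρ = rho1 ρ y * rho2 W ρ u)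
    (g : Eucl d × Sph k → Eucl d × Sph k → ℝ≥0)
    (hg : Measurable (Function.uncurry g))
    (g₀ : Eucl d → ℝ → ℝ≥0) (hg₀ : Measurable (Function.uncurry g₀))
    (hsoirs : ∀ (y₁ y₂ : Eucl d) (u₁ u₂ : Sph k),
      g (y₁, u₁) (y₂, u₂) = g₀ (y₁ - y₂) (gd u₁ u₂))
    (k₁ : Eucl d → Eucl d → ℝ≥0) (k₂ : Sph k → Sph k → ℝ≥0)
    (hk₁ : Measurable (Function.uncurry k₁)) (hk₂ : Measurable (Function.uncurry k₂))
    (hsep2 : ∀ (y₁ y₂ : Eucl d) (u₁ u₂ : Sph k),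
      g (y₁, u₁) (y₂, u₂) = k₁ y₁ y₂ * k₂ u₁ u₂)
    (hN2₀ : 0 < momN2 W ρ g) (hN2₁ : momN2 W ρ g < ⊤) :
    ∃ (g₀₁ : Eucl d → ℝ≥0∞) (g₀₂ : ℝ → ℝ≥0∞),
      Measurable g₀₁ ∧ Measurable g₀₂ ∧
      (∀ y₁ y₂ : Eucl d, gfun1 ρ g y₁ y₂ = g₀₁ (y₁ - y₂)) ∧
      (∀ u₁ u₂ : Sph k, gfun2 W ρ g u₁ u₂ = g₀₂ (gd u₁ u₂)) ∧
      (∀ (e : Sph k) (r s : ℝ), 0 ≤ r → 0 ≤ s → s ≤ π →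
        ssK (fun y t => (g₀ y t : ℝ≥0∞)) e r s =
          betaC W ρ g * (∫⁻ y in {y : Eucl d | ‖y‖ ≤ r}, g₀₁ y) *
            (∫⁻ u in {u : Sph k | gd u e ≤ s}, g₀₂ (gd u e) ∂(sphMeasure k))) := by
  classical
  set M := meanN W ρ with hM
  set R1 := rho1 ρ with hR1
  set R2 := rho2 W ρ with hR2
  set ν := sphMeasure k with hν
  have hM0 : M ≠ 0 := hEN₀.ne'
  have hMt : M ≠ ⊤ := hEN₁.ne
  have e0 : Sph k := ⟨EuclideanSpace.single 0 1, by simp⟩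
  have hprod0 : ∀ y u, R1 y * R2 u ≠ 0 := by
    intro y u
    rw [← hsep1]
    exact mul_ne_zero (by simpa using (hρpos (y, u)).ne') hM0
  have hprodt : ∀ y u, R1 y * R2 u ≠ ⊤ := by
    intro y u
    rw [← hsep1]
    exact ENNReal.mul_ne_top ENNReal.coe_ne_top hMt
  have hR10 : ∀ y, R1 y ≠ 0 := fun y => left_ne_zero_of_mul (hprod0 y e0)
  have hR20 : ∀ u, R2 u ≠ 0 := fun u => right_ne_zero_of_mul (hprod0 0 u)
  have hR1t : ∀ y, R1 y ≠ ⊤ := fun y h => hprodt y e0 (by rw [h, ENNReal.top_mul (hR20 e0)])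
  have hR2t : ∀ u, R2 u ≠ ⊤ := fun u h => hprodt 0 u (by rw [h, ENNReal.mul_top (hR10 0)])
  have hρE : ∀ y u, (ρ (y, u) : ℝ≥0∞) = M⁻¹ * R1 y * R2 u := by
    intro y u
    rw [mul_assoc, ← hsep1, mul_comm, mul_assoc, ENNReal.mul_inv_cancel hM0 hMt, mul_one]
  have : SigmaFinite ν := by
    have hf : AEMeasurable (fun u : Sph k => (ρ (0, u) : ℝ≥0∞)) ν := by fun_prop
    have : IsFiniteMeasure (ν.withDensity fun u : Sph k => (ρ (0, u) : ℝ≥0∞)) :=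
      isFiniteMeasure_withDensity (hR1t 0)
    have h2 := SigmaFinite.withDensity_of_ne_top
      (μ := ν.withDensity fun u : Sph k => (ρ (0, u) : ℝ≥0∞))
      (f := fun u : Sph k => (ρ (0, u) : ℝ≥0∞)⁻¹)
      (Filter.Eventually.of_forall fun u => by simpa using (hρpos (0, u)).ne')
    rwa [withDensity_inv_same₀ hf
      (Filter.Eventually.of_forall fun u => by simpa using (hρpos (0, u)).ne')
      (Filter.Eventually.of_forall fun u => ENNReal.coe_ne_top)] at h2
  have hmR1 : Measurable R1 :=
    Measurable.lintegral_prod_right' (f := fun p : Eucl d × Sph k => (ρ p : ℝ≥0∞)) (by fun_prop)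
  have hmR2 : Measurable R2 :=
    Measurable.lintegral_prod_left' (f := fun p : Eucl d × Sph k => (ρ p : ℝ≥0∞)) (by fun_prop)
  have hmgd : Measurable (fun p : Sph k × Sph k => gd p.1 p.2) := by
    unfold gd
    exact (Real.continuous_arccos.comp (by fun_prop)).measurable
  have hk₁' : Measurable (fun p : Eucl d × Eucl d => k₁ p.1 p.2) := hk₁
  have hk₂' : Measurable (fun p : Sph k × Sph k => k₂ p.1 p.2) := hk₂
  have hg₀' : Measurable (fun p : Eucl d × ℝ => g₀ p.1 p.2) := hg₀
  have hkey : ∀ y₁ y₂ u₁ u₂, (g₀ (y₁ - y₂) (gd u₁ u₂) : ℝ≥0∞) = k₁ y₁ y₂ * k₂ u₁ u₂ := by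
    intro y₁ y₂ u₁ u₂
    rw [← hsoirs, hsep2]; push_cast; rfl
  have hkey0 : ∀ y u₁ u₂, (g₀ y (gd u₁ u₂) : ℝ≥0∞) = k₁ y 0 * k₂ u₁ u₂ := by
    intro y u₁ u₂
    simpa using hkey y 0 u₁ u₂
  have mk2 : ∀ u, Measurable fun v => (k₂ u v : ℝ≥0∞) := fun u => 
    (hk₂'.comp (measurable_const.prodMk measurable_id)).coe_nnreal_ennreal
  have mk2l : ∀ v, Measurable fun u => (k₂ u v : ℝ≥0∞) := fun v => 
    (hk₂'.comp (measurable_id.prodMk measurable_const)).coe_nnreal_ennreal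
  have mk1 : ∀ y, Measurable fun z => (k₁ y z : ℝ≥0∞) := fun u => 
    (hk₁'.comp (measurable_const.prodMk measurable_id)).coe_nnreal_ennreal
  have mk1l : ∀ z, Measurable fun y => (k₁ y z : ℝ≥0∞) := fun z => 
    (hk₁'.comp (measurable_id.prodMk measurable_const)).coe_nnreal_ennreal
  -- inner integrals
  obtain ⟨H2, hH2⟩ : ∃ H2 : Sph k → ℝ≥0∞, ∀ u, H2 u = ∫⁻ v, R2 v * k₂ u v ∂ν := ⟨_, fun _ => rfl⟩
  obtain ⟨H1, hH1⟩ : ∃ H1 : Eucl d → ℝ≥0∞, ∀ y, H1 y = ∫⁻ z in W, R1 z * k₁ y z := ⟨_, fun _ => rfl⟩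
  have mH2 : Measurable H2 := by
    rw [funext hH2]
    exact Measurable.lintegral_prod_right' (f := fun p : Sph k × Sph k => R2 p.2 * k₂ p.1 p.2)
      ((hmR2.comp measurable_snd).mul hk₂'.coe_nnreal_ennreal)
  have mH1 : Measurable H1 := by
    rw [funext hH1]
    exact Measurable.lintegral_prod_right' (f := fun p : Eucl d × Eucl d => R1 p.2 * k₁ p.1 p.2)
      ((hmR1.comp measurable_snd).mul hk₁'.coe_nnreal_ennreal)
  obtain ⟨A, hA⟩ : ∃ A : ℝ≥0∞, A = ∫⁻ u, R2 u * H2 u ∂ν := ⟨_, rfl⟩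
  obtain ⟨B, hB⟩ : ∃ B : ℝ≥0∞, B = ∫⁻ y in W, R1 y * H1 y := ⟨_, rfl⟩
  -- double integrals with separable kernels
  have hIA : ∀ (c a : ℝ≥0∞), (∫⁻ u, ∫⁻ v, (c * (R2 u * R2 v)) * (a * k₂ u v) ∂ν ∂ν) = c * a * A := by
    intro c a
    rw [hA, ← lintegral_const_mul _ (by fun_prop)]
    refine lintegral_congr fun u => ?_
    rw [hH2, ← mul_assoc, ← lintegral_const_mul _ (by have := mk2 u; fun_prop)]
    refine lintegral_congr fun v => ?_
    ring
  have hIB : ∀ (c a : ℝ≥0∞),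
      (∫⁻ y in W, ∫⁻ z in W, (c * (R1 y * R1 z)) * (k₁ y z * a)) = c * a * B := by
    intro c a
    rw [hB, ← lintegral_const_mul _ (by fun_prop)]
    refine lintegral_congr fun u => ?_
    rw [hH1, ← mul_assoc, ← lintegral_const_mul _ (by have := mk1 u; fun_prop)]
    refine lintegral_congr fun v => ?_
    ring
  have hmom : momN2 W ρ g = M⁻¹ ^ 2 * (A * B) := by
    have hinner : ∀ y u, (∫⁻ q, ((ρ (y, u) : ℝ≥0∞) * (ρ q : ℝ≥0∞) * (g (y, u) q : ℝ≥0∞)) ∂(muW W k))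
        = (M⁻¹ * R1 y * H1 y) * (M⁻¹ * (R2 u * H2 u)) := by
      intro y u
      have hgm : Measurable (fun q => g (y, u) q) := hg.comp (measurable_const.prodMk measurable_id)
      rw [muW, lintegral_prod _ (by fun_prop)]
      have : ∀ z, (∫⁻ v, ((ρ (y, u) : ℝ≥0∞) * (ρ (z, v) : ℝ≥0∞) * (g (y, u) (z, v) : ℝ≥0∞)) ∂ν)
          = (M⁻¹ * R1 y * (M⁻¹ * (R2 u * H2 u))) * (R1 z * k₁ y z) := by
        intro z
        rw [hH2, mul_comm, ]
        simp only [← mul_assoc]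
        rw [← lintegral_const_mul _ (by have := mk2 u; fun_prop)]
        refine lintegral_congr fun v => ?_
        rw [hsep2, hρE, hρE]; push_cast
        ring
      simp only [← hν, this]
      rw [lintegral_const_mul _ (by have := mk1 y; fun_prop), ← hH1]
      ring
    have hgp : Measurable (fun p : Eucl d × Sph k =>
        (M⁻¹ * R1 p.1 * H1 p.1) * (M⁻¹ * (R2 p.2 * H2 p.2))) := by fun_prop
    have : momN2 W ρ g = ∫⁻ p, (M⁻¹ * R1 p.1 * H1 p.1) * (M⁻¹ * (R2 p.2 * H2 p.2)) ∂(muW W k) := by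
      unfold momN2
      exact lintegral_congr fun p => hinner p.1 p.2
    rw [this, muW, lintegral_prod _ hgp.aemeasurable]
    simp only [← hν]
    have h3 : ∀ y, (∫⁻ u, (M⁻¹ * R1 y * H1 y) * (M⁻¹ * (R2 u * H2 u)) ∂ν)
        = (M⁻¹ ^ 2 * A) * (R1 y * H1 y) := by
      intro y
      rw [lintegral_const_mul _ (by fun_prop), lintegral_const_mul _ (by fun_prop), ← hA]
      ring
    simp only [h3]
    rw [lintegral_const_mul _ (by fun_prop), ← hB]
    ring
  have hMi0 : M⁻¹ ≠ 0 := ENNReal.inv_ne_zero.mpr hMt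
  have hMit : M⁻¹ ≠ ⊤ := ENNReal.inv_ne_top.mpr hM0
  have hMM : M * M⁻¹ = 1 := ENNReal.mul_inv_cancel hM0 hMt
  have hc : betaC W ρ g * (M⁻¹ ^ 2 * A) * (M⁻¹ ^ 2 * B) = 1 := by
    have : betaC W ρ g * momN2 W ρ g = M ^ 2 := by
      unfold betaC
      rw [← hM, ENNReal.div_mul_cancel hN2₀.ne' hN2₁.ne]
    calc betaC W ρ g * (M⁻¹ ^ 2 * A) * (M⁻¹ ^ 2 * B)
        = (betaC W ρ g * (M⁻¹ ^ 2 * (A * B))) * M⁻¹ ^ 2 := by ring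
      _ = 1 := by rw [← hmom, this, ← mul_pow, hMM, one_pow]
  -- the two reduced pair correlation functions
  have hg01 : ∀ y, (∫⁻ u, ∫⁻ v, (M⁻¹ ^ 2 * (R2 u * R2 v)) * (g₀ y (gd u v) : ℝ≥0∞) ∂ν ∂ν)
      = M⁻¹ ^ 2 * A * k₁ y 0 := by
    intro y
    simp only [hkey0]
    rw [hIA]; ring
  have hg02 : ∀ u v, (∫⁻ y in W, ∫⁻ z in W, (M⁻¹ ^ 2 * (R1 y * R1 z)) * (g₀ (y - z) (gd u v) : ℝ≥0∞))
      = M⁻¹ ^ 2 * B * k₂ u v := by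
    intro u v
    simp only [hkey]
    rw [hIB]; ring
  refine ⟨fun y => ∫⁻ u, ∫⁻ v, (M⁻¹ ^ 2 * (R2 u * R2 v)) * (g₀ y (gd u v) : ℝ≥0∞) ∂ν ∂ν,
    fun t => ∫⁻ y in W, ∫⁻ z in W, (M⁻¹ ^ 2 * (R1 y * R1 z)) * (g₀ (y - z) t : ℝ≥0∞),
    ?_, ?_, ?_, ?_, ?_⟩
  · rw [funext hg01]
    exact (mk1l 0).const_mul _
  · refine Measurable.lintegral_prod_right' (f := fun p : ℝ × Eucl d =>
      ∫⁻ z in W, (M⁻¹ ^ 2 * (R1 p.2 * R1 z)) * (g₀ (p.2 - z) p.1 : ℝ≥0∞)) ?_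
    refine Measurable.lintegral_prod_right' (f := fun p : (ℝ × Eucl d) × Eucl d =>
      (M⁻¹ ^ 2 * (R1 p.1.2 * R1 p.2)) * (g₀ (p.1.2 - p.2) p.1.1 : ℝ≥0∞)) ?_
    have : Measurable (fun p : (ℝ × Eucl d) × Eucl d => g₀ (p.1.2 - p.2) p.1.1) :=
      hg₀'.comp (f := fun p : (ℝ × Eucl d) × Eucl d => (p.1.2 - p.2, p.1.1)) (by fun_prop)
    fun_prop
  · intro y₁ y₂
    have hne : R1 y₁ * R1 y₂ ≠ 0 := mul_ne_zero (hR10 _) (hR10 _)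
    have hnt : R1 y₁ * R1 y₂ ≠ ⊤ := ENNReal.mul_ne_top (hR1t _) (hR1t _)
    simp only []
    unfold gfun1
    rw [if_pos (pos_iff_ne_zero.mpr hne)]
    have h1 : (∫⁻ u₁, (∫⁻ u₂, ((ρ (y₁, u₁) : ℝ≥0∞) * (ρ (y₂, u₂) : ℝ≥0∞) *
        (g (y₁, u₁) (y₂, u₂) : ℝ≥0∞)) ∂ν) ∂ν) =
        ∫⁻ u, ∫⁻ v, (M⁻¹ ^ 2 * (R1 y₁ * R1 y₂) * (R2 u * R2 v)) * (k₁ y₁ y₂ * k₂ u v) ∂ν ∂ν := by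
      refine lintegral_congr fun u => lintegral_congr fun v => ?_
      rw [hsep2, hρE, hρE]; push_cast
      ring
    rw [← hν, h1, hIA]
    simp only [hkey]
    rw [hIA]
    refine ((ENNReal.eq_div_iff hne hnt).mpr ?_).symm
    ring
  · intro u₁ u₂
    have hne : R2 u₁ * R2 u₂ ≠ 0 := mul_ne_zero (hR20 _) (hR20 _)
    have hnt : R2 u₁ * R2 u₂ ≠ ⊤ := ENNReal.mul_ne_top (hR2t _) (hR2t _)
    simp only []
    unfold gfun2
    rw [if_pos (pos_iff_ne_zero.mpr hne)]
    have h1 : (∫⁻ y₁ in W, ∫⁻ y₂ in W, ((ρ (y₁, u₁) : ℝ≥0∞) * (ρ (y₂, u₂) : ℝ≥0∞) *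
        (g (y₁, u₁) (y₂, u₂) : ℝ≥0∞))) =
        ∫⁻ y in W, ∫⁻ z in W, (M⁻¹ ^ 2 * (R2 u₁ * R2 u₂) * (R1 y * R1 z)) * (k₁ y z * k₂ u₁ u₂) := by
      refine lintegral_congr fun u => lintegral_congr fun v => ?_
      rw [hsep2, hρE, hρE]; push_cast
      ring
    rw [h1, hIB, hg02]
    refine ((ENNReal.eq_div_iff hne hnt).mpr ?_).symm
    ring
  · intro e r s _ _ _
    simp only [hg01, hg02]
    unfold ssK
    simp only [hkey0, ← hν]
    have h1 : ∀ y, (∫⁻ u in {u : Sph k | gd u e ≤ s}, (k₁ y 0 : ℝ≥0∞) * (k₂ u e : ℝ≥0∞) ∂ν)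
        = k₁ y 0 * ∫⁻ u in {u : Sph k | gd u e ≤ s}, (k₂ u e : ℝ≥0∞) ∂ν :=
      fun y => lintegral_const_mul _ (mk2l e)
    simp only [h1]
    rw [lintegral_mul_const _ (mk1l 0), lintegral_const_mul _ (mk1l 0),
      lintegral_const_mul _ (mk2l e)]
    set I := ∫⁻ y in {y : Eucl d | ‖y‖ ≤ r}, (k₁ y 0 : ℝ≥0∞)
    set J := ∫⁻ u in {u : Sph k | gd u e ≤ s}, (k₂ u e : ℝ≥0∞) ∂ν
    calc I * J = 1 * (I * J) := (one_mul _).symm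
      _ = (betaC W ρ g * (M⁻¹ ^ 2 * A) * (M⁻¹ ^ 2 * B)) * (I * J) := by rw [hc]
      _ = _ := by ring
end
end

section
/- Let W ⊂ ℝ^d be a bounded measurable set with 0 < |W| < ∞. For all u₁, u₂ ∈ S^k, (1/|W|²) ∫_W ∫_W g(y₁,u₁,y₂,u₂) dy₁ dy₂ = 1 + c₂ C ∫_{S^k} k₀₂(d(u₁,u')) k₀₂(d(u₂,u')) dν(u'), where c₂ = (1/|W|²) ∫_{ℝ^d} ∫_W ∫_W k₀₁(y₁−y') k₀₁(y₂−y') dy₁ dy₂ dy' (equality holding in [0,∞]). In particular, the pair correlation function of the spherical components of the shot noise Cox process depends on the spatial kernel k₀₁ only through the constant c₂. -/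
open MeasureTheory Real Set
open scoped ENNReal NNReal RealInnerProductSpace Classical

noncomputable section

/-- The pair correlation function of a homogeneous shot noise Cox process on
`ℝ^d × S^k` with separable kernel `k₀₁ ⊗ k₀₂` and constant `C = m₂/(α m₁²)`. -/
noncomputable def sncpG {d k : ℕ} (C : ℝ≥0) (k₀₁ : Eucl d → ℝ≥0) (k₀₂ : ℝ → ℝ≥0)
    (y₁ : Eucl d) (u₁ : Sph k) (y₂ : Eucl d) (u₂ : Sph k) : ℝ≥0∞ :=
  1 + (C : ℝ≥0∞) * ∫⁻ y', (∫⁻ u', ((k₀₁ (y₁ - y') : ℝ≥0∞) * (k₀₁ (y₂ - y') : ℝ≥0∞) *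
    (k₀₂ (gd u₁ u') : ℝ≥0∞) * (k₀₂ (gd u₂ u') : ℝ≥0∞)) ∂(sphMeasure k))

/-- The pair correlation function of the spherical components of a shot noise Cox process
depends on the spatial kernel `k₀₁` only through the constant `c₂`. -/
theorem sncp_spherical_pcf (d k : ℕ) (hd : 1 ≤ d) (hk : 1 ≤ k)
    (W : Set (Eucl d)) (hWm : MeasurableSet W) (hWb : Bornology.IsBounded W)
    (hW₀ : 0 < volume W) (hW₁ : volume W < ⊤)
    (C : ℝ≥0) (k₀₁ : Eucl d → ℝ≥0) (k₀₂ : ℝ → ℝ≥0)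
    (hk₀₁ : Measurable k₀₁) (hk₀₂ : Measurable k₀₂) (u₁ u₂ : Sph k) :
    (∫⁻ y₁ in W, ∫⁻ y₂ in W, sncpG C k₀₁ k₀₂ y₁ u₁ y₂ u₂) / (volume W) ^ 2 =
      1 + ((∫⁻ y', ∫⁻ y₁ in W, ∫⁻ y₂ in W,
              ((k₀₁ (y₁ - y') : ℝ≥0∞) * (k₀₁ (y₂ - y') : ℝ≥0∞))) / (volume W) ^ 2) *
        (C : ℝ≥0∞) *
          ∫⁻ u', ((k₀₂ (gd u₁ u') : ℝ≥0∞) * (k₀₂ (gd u₂ u') : ℝ≥0∞)) ∂(sphMeasure k) := by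
  have hg : ∀ u : Sph k, Measurable (fun u' : Sph k => (k₀₂ (gd u u') : ℝ≥0∞)) := by
    intro u
    have h : Measurable (fun u' : Sph k => gd u u') := by
      have hc : Continuous (fun u' : Sph k => gd u u') := by
        unfold gd
        exact Real.continuous_arccos.comp (continuous_const.inner continuous_subtype_val)
      exact hc.measurable
    exact (hk₀₂.comp h).coe_nnreal_ennreal
  set S : ℝ≥0∞ :=
    ∫⁻ u', ((k₀₂ (gd u₁ u') : ℝ≥0∞) * (k₀₂ (gd u₂ u') : ℝ≥0∞)) ∂(sphMeasure k) with hS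
  have hK : Measurable (fun y : Eucl d => (k₀₁ y : ℝ≥0∞)) := hk₀₁.coe_nnreal_ennreal
  have hF : Measurable (fun p : (Eucl d × Eucl d) × Eucl d =>
      (k₀₁ (p.1.1 - p.2) : ℝ≥0∞) * (k₀₁ (p.1.2 - p.2) : ℝ≥0∞)) :=
    (hK.comp (by fun_prop : Measurable (fun p : (Eucl d × Eucl d) × Eucl d => p.1.1 - p.2))).mul
      (hK.comp (by fun_prop : Measurable (fun p : (Eucl d × Eucl d) × Eucl d => p.1.2 - p.2)))
  set A : Eucl d → Eucl d → ℝ≥0∞ := fun y₁ y₂ =>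
    ∫⁻ y', (k₀₁ (y₁ - y') : ℝ≥0∞) * (k₀₁ (y₂ - y') : ℝ≥0∞) with hA
  have hAm : Measurable (fun p : Eucl d × Eucl d => A p.1 p.2) := hF.lintegral_prod_right'
  have hAm1 : ∀ y₁, Measurable (A y₁) := fun y₁ => hAm.comp measurable_prodMk_left
  have hAm2 : Measurable (fun y₁ => ∫⁻ y₂ in W, A y₁ y₂) := hAm.lintegral_prod_right'
  have h1 : ∀ y₁ y₂, sncpG C k₀₁ k₀₂ y₁ u₁ y₂ u₂ = 1 + (C * S) * A y₁ y₂ := by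
    intro y₁ y₂
    unfold sncpG
    have : ∀ y' : Eucl d, (∫⁻ u', ((k₀₁ (y₁ - y') : ℝ≥0∞) * (k₀₁ (y₂ - y') : ℝ≥0∞) *
        (k₀₂ (gd u₁ u') : ℝ≥0∞) * (k₀₂ (gd u₂ u') : ℝ≥0∞)) ∂(sphMeasure k))
        = ((k₀₁ (y₁ - y') : ℝ≥0∞) * (k₀₁ (y₂ - y') : ℝ≥0∞)) * S := by
      intro y'
      have hm : Measurable (fun u' : Sph k =>
          (k₀₂ (gd u₁ u') : ℝ≥0∞) * (k₀₂ (gd u₂ u') : ℝ≥0∞)) := (hg u₁).mul (hg u₂)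
      rw [hS, ← lintegral_const_mul _ hm]
      simp only [mul_assoc]
    simp only [this]
    have hm : Measurable (fun y' : Eucl d =>
        (k₀₁ (y₁ - y') : ℝ≥0∞) * (k₀₁ (y₂ - y') : ℝ≥0∞)) :=
      hF.comp (measurable_prodMk_left (x := (y₁, y₂)))
    rw [lintegral_mul_const _ hm]
    rw [hA]
    ring
  have h2 : (∫⁻ y₁ in W, ∫⁻ y₂ in W, sncpG C k₀₁ k₀₂ y₁ u₁ y₂ u₂)
      = volume W ^ 2 + (C * S) * ∫⁻ y₁ in W, ∫⁻ y₂ in W, A y₁ y₂ := by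
    have : ∀ y₁, (∫⁻ y₂ in W, sncpG C k₀₁ k₀₂ y₁ u₁ y₂ u₂)
        = volume W + (C * S) * ∫⁻ y₂ in W, A y₁ y₂ := by
      intro y₁
      simp only [h1]
      rw [lintegral_add_left measurable_const, lintegral_const_mul _ (hAm1 y₁)]
      simp
    simp only [this]
    rw [lintegral_add_left measurable_const, lintegral_const_mul _ hAm2]
    simp [sq]
  have h3 : (∫⁻ y', ∫⁻ y₁ in W, ∫⁻ y₂ in W,
      ((k₀₁ (y₁ - y') : ℝ≥0∞) * (k₀₁ (y₂ - y') : ℝ≥0∞)))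
      = ∫⁻ y₁ in W, ∫⁻ y₂ in W, A y₁ y₂ := by
    have hm : Measurable (fun q : (Eucl d × Eucl d) => ∫⁻ y₂ in W,
        ((k₀₁ (q.2 - q.1) : ℝ≥0∞) * (k₀₁ (y₂ - q.1) : ℝ≥0∞))) :=
      (hF.comp (by fun_prop : Measurable (fun p : (Eucl d × Eucl d) × Eucl d =>
        ((p.1.2, p.2), p.1.1)))).lintegral_prod_right'
    rw [lintegral_lintegral_swap hm.aemeasurable]
    refine lintegral_congr fun y₁ => ?_
    rw [lintegral_lintegral_swap]
    exact (hF.comp (by fun_prop : Measurable (fun p : Eucl d × Eucl d =>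
        ((y₁, p.2), p.1)))).aemeasurable
  rw [h2, h3, ENNReal.add_div, ENNReal.div_self (pow_ne_zero _ hW₀.ne')
    (ENNReal.pow_ne_top hW₁.ne)]
  simp only [div_eq_mul_inv]
  ring
end
end
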